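/- Jacobian identity for T in the canonical form (Step 2 of the proof of Proposition 5). Consider the canonical form, let θ = (θ_a, θ_b) ∈ R^{2n}, w ∈ R^r, and let λ_1, …, λ_r be nonzero reals, none of which is an eigenvalue of A(θ_a). Then the Jacobian of (x, θ) ↦ T(x, θ, w) satisfies Diag{1 − V_{λ_1}^T θ_a, …, 1 − V_{λ_r}^T θ_a} · (∂T/∂(x,θ))(x, θ, w) = P(T(x,θ,w), w), where the diagonal entries 1 − V_{λ_i}^T θ_a are all nonzero. In particular, if for some L_T > 0 the uniform lower bound |T(x,θ,w) − T(x*,θ*,w)| ≥ L_T |(x−x*, θ−θ*)| holds on a neighborhood of (x,θ), then the r×3n matrix P(T(x,θ,w), w) has full column rank 3n. -/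

import Mathlib

open scoped Matrix BigOperators

/-- The Euclidean norm of a vector in `ℝ^m`. -/
noncomputable def eNorm {m : ℕ} (x : Fin m → ℝ) : ℝ := Real.sqrt (∑ i, (x i) ^ 2)

/-- The first basis row vector `e₁ᵀ = (1, 0, …, 0)`. -/
def e1 (n : ℕ) : Fin n → ℝ := fun j => if (j : ℕ) = 0 then 1 else 0

/-- Canonical SISO form : `A(θ_a)` has first column `−θ_a` and entries `(i, i+1)` equal
to `1`, all other entries `0`. -/
def Acan (n : ℕ) (θa : Fin n → ℝ) : Matrix (Fin n) (Fin n) ℝ :=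
  fun i j => if (j : ℕ) = 0 then -θa i else if (j : ℕ) = (i : ℕ) + 1 then 1 else 0

/-- `V_λ = −(1/λ, 1/λ², …, 1/λ^n)ᵀ`. -/
noncomputable def Vlam (n : ℕ) (lam : ℝ) : Fin n → ℝ :=
  fun i => -(1 / lam ^ ((i : ℕ) + 1))

/-- The Luenberger map for the canonical form. -/
noncomputable def Tcan (n r : ℕ) (lam : Fin r → ℝ) (x θa θb : Fin n → ℝ)
    (w : Fin r → ℝ) : Fin r → ℝ :=
  fun i => Matrix.vecMul (e1 n) (Acan n θa - lam i • (1 : Matrix (Fin n) (Fin n) ℝ))⁻¹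
    ⬝ᵥ (x - w i • θb)

/-- The `r × 3n` matrix `P(z,w)` with rows `Pᵢ = [V_{λᵢ}ᵀ, zᵢ V_{λᵢ}ᵀ, −wᵢ V_{λᵢ}ᵀ]`. -/
noncomputable def Pmat (n r : ℕ) (lam : Fin r → ℝ) (z w : Fin r → ℝ) :
    Matrix (Fin r) (Fin (3 * n)) ℝ :=
  fun i j =>
    if h : (j : ℕ) < n then Vlam n (lam i) ⟨(j : ℕ), h⟩
    else if h2 : (j : ℕ) < 2 * n then z i * Vlam n (lam i) ⟨(j : ℕ) - n, by omega⟩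
    else -(w i) * Vlam n (lam i) ⟨(j : ℕ) - 2 * n, by have := j.2; omega⟩

/-- The concatenation `(x, θ_a, θ_b) ∈ ℝ^{3n}`. -/
def stack3 (n : ℕ) (x θa θb : Fin n → ℝ) : Fin (3 * n) → ℝ :=
  fun j =>
    if h : (j : ℕ) < n then x ⟨(j : ℕ), h⟩
    else if h2 : (j : ℕ) < 2 * n then θa ⟨(j : ℕ) - n, by omega⟩
    else θb ⟨(j : ℕ) - 2 * n, by have := j.2; omega⟩


lemma aux_vecMul (n : ℕ) (θa : Fin n → ℝ) (l : ℝ) (hl : l ≠ 0) :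
    Matrix.vecMul (Vlam n l) (Acan n θa - l • (1 : Matrix (Fin n) (Fin n) ℝ))
      = (1 - Vlam n l ⬝ᵥ θa) • e1 n := by
  rw [Matrix.vecMul_sub, Matrix.vecMul_smul, Matrix.vecMul_one]
  funext j
  simp only [Pi.sub_apply, Pi.smul_apply, smul_eq_mul, e1]
  by_cases hj : (j : ℕ) = 0
  · have : Matrix.vecMul (Vlam n l) (Acan n θa) j = - (Vlam n l ⬝ᵥ θa) := by
      simp [Matrix.vecMul, dotProduct, Acan, hj]
    rw [this]
    simp [Vlam, hj]
    field_simp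
    ring
  · have hlt : (j : ℕ) - 1 < n := by omega
    have : Matrix.vecMul (Vlam n l) (Acan n θa) j = Vlam n l ⟨(j : ℕ) - 1, hlt⟩ := by
      simp only [Matrix.vecMul, dotProduct, Acan, hj, if_false]
      rw [Finset.sum_eq_single ⟨(j : ℕ) - 1, hlt⟩]
      · simp; omega
      · intro b _ hb
        have : ¬ ((j : ℕ) = (b : ℕ) + 1) := by
          intro h
          apply hb
          ext
          simp
          omega
        simp [this]
      · simp
    rw [this]
    obtain ⟨k, hk⟩ : ∃ k, (j : ℕ) = k + 1 := ⟨(j : ℕ) - 1, by omega⟩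
    simp [Vlam, hk]
    field_simp
    ring

lemma aux_ne (n : ℕ) (θa : Fin n → ℝ) (l : ℝ) (hl : l ≠ 0)
    (h : IsUnit (Acan n θa - l • (1 : Matrix (Fin n) (Fin n) ℝ)).det) :
    1 - Vlam n l ⬝ᵥ θa ≠ 0 := by
  intro h0
  have h1 := aux_vecMul n θa l hl
  rw [h0, zero_smul] at h1
  have h2 : Vlam n l = 0 := by
    have := congrArg (fun v => Matrix.vecMul v
      (Acan n θa - l • (1 : Matrix (Fin n) (Fin n) ℝ))⁻¹) h1
    simpa [Matrix.vecMul_vecMul, Matrix.mul_nonsing_inv _ h] using this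
  rw [h2] at h0
  simp at h0

lemma aux_T (n : ℕ) (θa : Fin n → ℝ) (l : ℝ) (hl : l ≠ 0)
    (h : IsUnit (Acan n θa - l • (1 : Matrix (Fin n) (Fin n) ℝ)).det) (u : Fin n → ℝ) :
    Matrix.vecMul (e1 n) (Acan n θa - l • (1 : Matrix (Fin n) (Fin n) ℝ))⁻¹ ⬝ᵥ u
      = (Vlam n l ⬝ᵥ u) / (1 - Vlam n l ⬝ᵥ θa) := by
  have hne := aux_ne n θa l hl h
  have h1 := aux_vecMul n θa l hl
  have h2 : Vlam n l = (1 - Vlam n l ⬝ᵥ θa) • Matrix.vecMul (e1 n)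
      (Acan n θa - l • (1 : Matrix (Fin n) (Fin n) ℝ))⁻¹ := by
    have := congrArg (fun v => Matrix.vecMul v
      (Acan n θa - l • (1 : Matrix (Fin n) (Fin n) ℝ))⁻¹) h1
    simpa [Matrix.vecMul_vecMul, Matrix.mul_nonsing_inv _ h, Matrix.smul_vecMul] using this
  rw [eq_div_iff hne]
  conv_rhs => rw [h2]
  rw [smul_dotProduct, smul_eq_mul, mul_comm]

lemma aux_sum3 (n : ℕ) (f : Fin (3 * n) → ℝ) :
    ∑ j, f j = (∑ i : Fin n, f ⟨i, by omega⟩) + (∑ i : Fin n, f ⟨i + n, by omega⟩)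
      + ∑ i : Fin n, f ⟨i + 2 * n, by omega⟩ := by
  have e : n + n + n = 3 * n := by ring
  rw [← (finCongr e).sum_comp, Fin.sum_univ_add, Fin.sum_univ_add]
  congr 1
  · congr 1
    apply Finset.sum_congr rfl
    intro i _
    congr 1
    ext
    simp [add_comm]
  · apply Finset.sum_congr rfl
    intro i _
    congr 1
    ext
    simp
    ring

lemma aux_P (n r : ℕ) (lam z w : Fin r → ℝ) (a b c : Fin n → ℝ) (i : Fin r) :
    (Pmat n r lam z w *ᵥ stack3 n a b c) i
      = Vlam n (lam i) ⬝ᵥ a + z i * (Vlam n (lam i) ⬝ᵥ b) - w i * (Vlam n (lam i) ⬝ᵥ c) := by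
  rw [Matrix.mulVec, dotProduct, aux_sum3, sub_eq_add_neg]
  congr 1
  · congr 1
    · apply Finset.sum_congr rfl
      intro k _
      simp [Pmat, stack3]
    · rw [dotProduct, Finset.mul_sum]
      apply Finset.sum_congr rfl
      intro k _
      have : (k : ℕ) + n < 2 * n := by omega
      simp [Pmat, stack3, this]
      ring
  · rw [dotProduct, Finset.mul_sum, ← Finset.sum_neg_distrib]
    apply Finset.sum_congr rfl
    intro k _
    have h1 : ¬ ((k : ℕ) + 2 * n < n) := by omega
    simp [Pmat, stack3, h1]
    ring

lemma aux_open (n : ℕ) (θa : Fin n → ℝ) (l : ℝ)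
    (h : IsUnit (Acan n θa - l • (1 : Matrix (Fin n) (Fin n) ℝ)).det) :
    ∀ᶠ θ in nhds θa, IsUnit (Acan n θ - l • (1 : Matrix (Fin n) (Fin n) ℝ)).det := by
  have hc : Continuous fun θ : Fin n → ℝ =>
      (Acan n θ - l • (1 : Matrix (Fin n) (Fin n) ℝ)).det := by
    apply Continuous.matrix_det
    apply Continuous.sub _ continuous_const
    refine continuous_matrix fun i j => ?_
    unfold Acan
    split_ifs <;> fun_prop
  simp only [isUnit_iff_ne_zero] at h ⊢
  exact hc.continuousAt.eventually_ne h

lemma aux_ev (n r : ℕ) (θa θb x : Fin n → ℝ) (w lam : Fin r → ℝ) (hlam : ∀ i, lam i ≠ 0)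
    (hinv : ∀ i : Fin r,
      IsUnit (Acan n θa - lam i • (1 : Matrix (Fin n) (Fin n) ℝ)).det) :
    (fun p : (Fin n → ℝ) × (Fin n → ℝ) × (Fin n → ℝ) => Tcan n r lam p.1 p.2.1 p.2.2 w)
      =ᶠ[nhds (x, θa, θb)] fun p i =>
        (Vlam n (lam i) ⬝ᵥ (p.1 - w i • p.2.2)) / (1 - Vlam n (lam i) ⬝ᵥ p.2.1) := by
  have hc : Filter.Tendsto (fun p : (Fin n → ℝ) × (Fin n → ℝ) × (Fin n → ℝ) => p.2.1)
      (nhds (x, θa, θb)) (nhds θa) := by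
    have : Continuous (fun p : (Fin n → ℝ) × (Fin n → ℝ) × (Fin n → ℝ) => p.2.1) := by fun_prop
    exact this.tendsto (x, θa, θb)
  have := Filter.eventually_all.2 fun i => hc.eventually (aux_open n θa (lam i) (hinv i))
  filter_upwards [this] with p hp
  funext i
  exact aux_T n p.2.1 (lam i) (hlam i) (hp i) _

lemma aux_diff (n r : ℕ) (θa θb x : Fin n → ℝ) (w lam : Fin r → ℝ) (hlam : ∀ i, lam i ≠ 0)
    (hinv : ∀ i : Fin r,
      IsUnit (Acan n θa - lam i • (1 : Matrix (Fin n) (Fin n) ℝ)).det) :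
    DifferentiableAt ℝ
    (fun p : (Fin n → ℝ) × (Fin n → ℝ) × (Fin n → ℝ) => Tcan n r lam p.1 p.2.1 p.2.2 w)
      (x, θa, θb) := by
  refine DifferentiableAt.congr_of_eventuallyEq ?_ (aux_ev n r θa θb x w lam hlam hinv)
  rw [differentiableAt_pi]
  intro i
  have := aux_ne n θa (lam i) (hlam i) (hinv i)
  simp only [div_eq_mul_inv]
  refine DifferentiableAt.mul ?_ (DifferentiableAt.inv ?_ ?_)
  · simp only [dotProduct, Pi.sub_apply, Pi.smul_apply]
    fun_prop
  · simp only [dotProduct]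
    fun_prop
  · exact this

lemma aux_line (n r : ℕ) (θa θb x : Fin n → ℝ) (w lam : Fin r → ℝ) (hlam : ∀ i, lam i ≠ 0)
    (hinv : ∀ i : Fin r,
      IsUnit (Acan n θa - lam i • (1 : Matrix (Fin n) (Fin n) ℝ)).det)
    (v : (Fin n → ℝ) × (Fin n → ℝ) × (Fin n → ℝ)) :
    HasDerivAt (fun t : ℝ => (fun p : (Fin n → ℝ) × (Fin n → ℝ) × (Fin n → ℝ) =>
        Tcan n r lam p.1 p.2.1 p.2.2 w) ((x, θa, θb) + t • v))
      (fderiv ℝ (fun p : (Fin n → ℝ) × (Fin n → ℝ) × (Fin n → ℝ) =>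
              Tcan n r lam p.1 p.2.1 p.2.2 w) (x, θa, θb) v) 0 :=
  (aux_diff n r θa θb x w lam hlam hinv).hasFDerivAt.hasLineDerivAt v

lemma aux_main (n r : ℕ) (θa θb x : Fin n → ℝ) (w lam : Fin r → ℝ) (hlam : ∀ i, lam i ≠ 0)
    (hinv : ∀ i : Fin r,
      IsUnit (Acan n θa - lam i • (1 : Matrix (Fin n) (Fin n) ℝ)).det)
    (vx vθa vθb : Fin n → ℝ) :
      (fun i : Fin r => (1 - Vlam n (lam i) ⬝ᵥ θa)
          * fderiv ℝ (fun p : (Fin n → ℝ) × (Fin n → ℝ) × (Fin n → ℝ) =>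
              Tcan n r lam p.1 p.2.1 p.2.2 w) (x, θa, θb) (vx, vθa, vθb) i)
        = Pmat n r lam (Tcan n r lam x θa θb w) w *ᵥ stack3 n vx vθa vθb := by
  funext i
  have hne := aux_ne n θa (lam i) (hlam i) (hinv i)
  rw [aux_P]
  have hT : Tcan n r lam x θa θb w i = (Vlam n (lam i) ⬝ᵥ (x - w i • θb)) /
    (1 - Vlam n (lam i) ⬝ᵥ θa) := aux_T n θa (lam i) (hlam i) (hinv i) _
  rw [hT]
  have h1 := hasDerivAt_pi.1 (aux_line n r θa θb x w lam hlam hinv (vx, vθa, vθb)) i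
  have hc : Filter.Tendsto (fun t : ℝ => (x, θa, θb) + t • (vx, vθa, vθb)) (nhds 0)
      (nhds (x, θa, θb)) := by
    have : Continuous (fun t : ℝ => (x, θa, θb) + t • (vx, vθa, vθb)) := by fun_prop
    simpa using this.tendsto 0
  have hev := hc.eventually (aux_ev n r θa θb x w lam hlam hinv)
  set V := Vlam n (lam i) with hV
  have h2 : HasDerivAt (fun t : ℝ => (V ⬝ᵥ (x - w i • θb) + t * (V ⬝ᵥ (vx - w i • vθb))) /
      ((1 - V ⬝ᵥ θa) - t * (V ⬝ᵥ vθa)))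
      (((1 * (V ⬝ᵥ (vx - w i • vθb))) * ((1 - V ⬝ᵥ θa) - 0 * (V ⬝ᵥ vθa)) -
        (V ⬝ᵥ (x - w i • θb) + 0 * (V ⬝ᵥ (vx - w i • vθb))) * (-(1 * (V ⬝ᵥ vθa)))) /
        ((1 - V ⬝ᵥ θa) - 0 * (V ⬝ᵥ vθa)) ^ 2) 0 := by
    apply HasDerivAt.div
    · exact ((hasDerivAt_id (0 : ℝ)).mul_const _).const_add _
    · exact ((hasDerivAt_id (0 : ℝ)).mul_const _).const_sub _
    · simpa using hne
  have h3 := h1.unique (h2.congr_of_eventuallyEq (by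
    filter_upwards [hev] with t ht
    rw [ht]
    simp only [Prod.fst_add, Prod.snd_add, Prod.smul_fst, Prod.smul_snd, ← hV]
    simp only [dotProduct_add, dotProduct_sub, dotProduct_smul, smul_eq_mul]
    congr 1 <;> ring))
  rw [h3]
  simp only [dotProduct_sub, dotProduct_smul, smul_eq_mul, zero_mul, sub_zero, add_zero, one_mul]
  field_simp
  ring

lemma aux_stack (n : ℕ) (v : Fin (3 * n) → ℝ) :
    ∃ a b c, v = stack3 n a b c := by
  refine ⟨fun i => v ⟨i, by omega⟩, fun i => v ⟨i + n, by omega⟩,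
    fun i => v ⟨i + 2 * n, by omega⟩, ?_⟩
  funext j
  unfold stack3
  split_ifs
  · rfl
  · congr 1
    ext
    simp
    omega
  · congr 1
    ext
    simp
    omega

lemma aux_eNorm_smul {m : ℕ} (t : ℝ) (v : Fin m → ℝ) : eNorm (t • v) = |t| * eNorm v := by
  unfold eNorm
  simp only [Pi.smul_apply, smul_eq_mul, mul_pow, ← Finset.mul_sum]
  rw [Real.sqrt_mul (sq_nonneg t), Real.sqrt_sq_eq_abs]

lemma aux_eNorm_zero {m : ℕ} (v : Fin m → ℝ) (h : eNorm v ≤ 0) : v = 0 := by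
  unfold eNorm at h
  rw [Real.sqrt_le_left le_rfl] at h
  have h0 := (Finset.sum_eq_zero_iff_of_nonneg (fun i _ => sq_nonneg (v i))).1
    (le_antisymm (by simpa using h) (Finset.sum_nonneg fun i _ => sq_nonneg (v i)))
  funext i
  simpa using h0 i (Finset.mem_univ i)

lemma aux_stack_smul (n : ℕ) (t : ℝ) (a b c : Fin n → ℝ) :
    stack3 n (t • a) (t • b) (t • c) = t • stack3 n a b c := by
  funext j
  simp only [stack3, Pi.smul_apply]
  split_ifs <;> rfl

/-- Step 2 of the proof of Proposition 5, Jacobian identity for `T`: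
`Diag{1 − V_{λᵢ}ᵀθ_a} · ∂T/∂(x,θ) = P(T(x,θ,w), w)` with nonzero diagonal entries ;
in particular, under a local uniform injectivity bound, `P(T(x,θ,w), w)` has full
column rank `3n`. -/
theorem jacobian_identity_canonical
    (n r : ℕ) (θa θb : Fin n → ℝ) (x : Fin n → ℝ) (w : Fin r → ℝ)
    (lam : Fin r → ℝ) (hlam : ∀ i, lam i ≠ 0)
    (hinv : ∀ i : Fin r,
      IsUnit (Acan n θa - lam i • (1 : Matrix (Fin n) (Fin n) ℝ)).det) :
    (∀ i : Fin r, 1 - Vlam n (lam i) ⬝ᵥ θa ≠ 0) ∧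
    (∀ vx vθa vθb : Fin n → ℝ,
      (fun i : Fin r => (1 - Vlam n (lam i) ⬝ᵥ θa)
          * fderiv ℝ (fun p : (Fin n → ℝ) × (Fin n → ℝ) × (Fin n → ℝ) =>
              Tcan n r lam p.1 p.2.1 p.2.2 w) (x, θa, θb) (vx, vθa, vθb) i)
        = Pmat n r lam (Tcan n r lam x θa θb w) w *ᵥ stack3 n vx vθa vθb) ∧
    (∀ LT : ℝ, 0 < LT →
      ∀ U : Set ((Fin n → ℝ) × (Fin n → ℝ) × (Fin n → ℝ)),
        U ∈ nhds (x, θa, θb) →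
        (∀ p ∈ U, ∀ p' ∈ U,
          eNorm (Tcan n r lam p.1 p.2.1 p.2.2 w - Tcan n r lam p'.1 p'.2.1 p'.2.2 w)
            ≥ LT * eNorm (stack3 n (p.1 - p'.1) (p.2.1 - p'.2.1) (p.2.2 - p'.2.2))) →
        (Pmat n r lam (Tcan n r lam x θa θb w) w).rank = 3 * n) := by
  refine ⟨fun i => aux_ne n θa (lam i) (hlam i) (hinv i),
    fun vx vθa vθb => aux_main n r θa θb x w lam hlam hinv vx vθa vθb, ?_⟩
  intro LT hLT U hU hb
  have hinj : ∀ v, Pmat n r lam (Tcan n r lam x θa θb w) w *ᵥ v = 0 → v = 0 := by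
    intro v hv
    obtain ⟨a, b, c, rfl⟩ := aux_stack n v
    rw [← aux_main n r θa θb x w lam hlam hinv] at hv
    have hd : fderiv ℝ (fun p : (Fin n → ℝ) × (Fin n → ℝ) × (Fin n → ℝ) =>
              Tcan n r lam p.1 p.2.1 p.2.2 w) (x, θa, θb) (a, b, c) = 0 := by
      funext i
      have := congrFun hv i
      simpa [aux_ne n θa (lam i) (hlam i) (hinv i)] using this
    have hl := aux_line n r θa θb x w lam hlam hinv (a, b, c)
    rw [hd, hasDerivAt_iff_tendsto_slope] at hl
    have hcont : Continuous (eNorm : (Fin r → ℝ) → ℝ) := by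
      unfold eNorm
      fun_prop
    have hl2 := (hcont.tendsto 0).comp hl
    have hz : eNorm (0 : Fin r → ℝ) = 0 := by simp [eNorm]
    rw [hz] at hl2
    have hc : Filter.Tendsto (fun t : ℝ => (x, θa, θb) + t • (a, b, c)) (nhds 0)
        (nhds (x, θa, θb)) := by
      have : Continuous (fun t : ℝ => (x, θa, θb) + t • (a, b, c)) := by fun_prop
      simpa using this.tendsto 0
    have hle : LT * eNorm (stack3 n a b c) ≤ 0 := by
      refine ge_of_tendsto hl2 ?_
      filter_upwards [(hc.eventually hU).filter_mono nhdsWithin_le_nhds, self_mem_nhdsWithin]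
        with t ht ht0
      have ht0' : t ≠ 0 := ht0
      have key := hb _ ht _ (mem_of_mem_nhds hU)
      have e : stack3 n (((x, θa, θb) + t • (a, b, c)).1 - x)
          (((x, θa, θb) + t • (a, b, c)).2.1 - θa)
          (((x, θa, θb) + t • (a, b, c)).2.2 - θb) = t • stack3 n a b c := by
        rw [← aux_stack_smul]
        simp
      rw [e, aux_eNorm_smul] at key
      simp only [Function.comp, slope, vsub_eq_sub, sub_zero, zero_smul, add_zero]
      rw [aux_eNorm_smul, abs_inv, ← div_eq_inv_mul, le_div_iff₀ (abs_pos.2 ht0')]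
      calc _ = LT * (|t| * eNorm (stack3 n a b c)) := by ring
        _ ≤ _ := key
    apply aux_eNorm_zero
    by_contra hcon
    push Not at hcon
    have := mul_pos hLT hcon
    linarith
  have hi : Function.Injective (Pmat n r lam (Tcan n r lam x θa θb w) w).mulVecLin := by
    rw [← LinearMap.ker_eq_bot, LinearMap.ker_eq_bot']
    intro v hv
    exact hinj v hv
  rw [Matrix.rank, LinearMap.finrank_range_of_inj hi]
  simp
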